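/- Let e, h, f be an sl₂-triple in a complex semisimple Lie algebra g, with grading g = ⊕_i g(i) by ad(h)-eigenvalues. Then the bilinear form on g(−1) defined by ⟨x, y⟩ = (e, [x,y]) (where (,) is the Killing form) is skew-symmetric and non-degenerate. -/

import Mathlib

open Module

/-!
Since `κ(e, [x, y]) = κ([e, x], y)`, two facts give non-degeneracy: `ad e` is injective on
`g(-1)`, as a nonzero `x ∈ g(-1)` with `[e, x] = 0` would be a primitive vector of negative
weight, and `κ` pairs `g(1)` perfectly with `g(-1)`. The latter needs `ad h` to be semisimple, and
this follows from an identity of Jacobson: in an associative algebra, `e ^ n = 0` forces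
`∏_{|k|<n} (h - k) = 0`. Indeed `e ^ n * f ^ n` and `f ^ n * e ^ n` both vanish and are products
of `n` polynomials in the commuting elements `h` and `f * e`. The difference of a factor `a j` of
the first and a factor `b i` of the second is `(i + j + 1) * (h - (j - i))`. Localized at a
maximal ideal of the commutative algebra generated by `h` and `f * e`, each product has exactly
one factor that is not invertible, so these two factors are zero there, and with them
`h - (j - i)`.
-/

open Polynomial Finset

section Commutative

variable {S : Type*} [CommRing S]

lemma exists_mem_and_exists_notMem_mul_eq_zero {ι : Type*} {s : Finset ι} {a : ι → S}
    (ha : ∏ j ∈ s, a j = 0) (m : Ideal S) [m.IsPrime]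
    (huniq : ∀ j ∈ s, ∀ k ∈ s, a j ∈ m → a k ∈ m → j = k) :
    ∃ j ∈ s, a j ∈ m ∧ ∃ r ∉ m, a j * r = 0 := by
  classical
  obtain ⟨j, hjs, hj⟩ := Ideal.IsPrime.prod_mem_iff.mp (ha ▸ m.zero_mem)
  refine ⟨j, hjs, hj, ∏ k ∈ s.erase j, a k, fun hr ↦ ?_, by rw [mul_prod_erase s a hjs, ha]⟩
  obtain ⟨k, hks, hk⟩ := Ideal.IsPrime.prod_mem_iff.mp hr
  exact ne_of_mem_erase hks (huniq k (mem_of_mem_erase hks) j hjs hk hj)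

variable (K : Type*) [Field K] [CharZero K] [Algebra K S]

include K in
lemma isUnit_intCast_of_ne_zero {k : ℤ} (hk : k ≠ 0) : IsUnit (k : S) := by
  simpa using (IsUnit.mk0 (k : K) (Int.cast_ne_zero.mpr hk)).map (algebraMap K S)

include K in
theorem prod_sub_intCast_eq_zero_of_sub_eq {n : ℕ} {a b : ℕ → S} {x : S}
    (hab : ∀ i j : ℕ, a j - b i = ((i + j + 1 : ℤ) : S) * (x - ((j - i : ℤ) : S)))
    (ha : ∏ j ∈ range n, a j = 0) (hb : ∏ i ∈ range n, b i = 0) :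
    ∏ k ∈ Ioo (-n : ℤ) n, (x - (k : S)) = 0 := by
  set p := ∏ k ∈ Ioo (-n : ℤ) n, (x - (k : S))
  by_contra hp
  -- A maximal ideal over the annihilator of `p`: it suffices that some `r ∉ m` annihilates `p`.
  obtain ⟨m, hm, hann⟩ := Ideal.exists_le_maximal (Ideal.span {p}).annihilator
    (by simpa [Ideal.span_singleton_eq_bot] using hp)
  have eq_of_sub_mem {c d : ℤ} (hc : x - (c : S) ∈ m) (hd : x - (d : S) ∈ m) : c = d := by
    by_contra hcd
    refine hm.ne_top (m.eq_top_of_isUnit_mem ?_ (isUnit_intCast_of_ne_zero K (sub_ne_zero.mpr hcd)))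
    simpa using m.sub_mem hd hc
  have sub_mem {i j : ℕ} (hj : a j ∈ m) (hi : b i ∈ m) : x - ((j - i : ℤ) : S) ∈ m :=
    (Ideal.unit_mul_mem_iff_mem m
      (isUnit_intCast_of_ne_zero K (k := i + j + 1) (by lia))).mp (hab i j ▸ m.sub_mem hj hi)
  obtain ⟨i₀, -, hi₀⟩ := Ideal.IsPrime.prod_mem_iff.mp (hb ▸ m.zero_mem)
  obtain ⟨j, hjn, hj, r, hr, hjr⟩ := exists_mem_and_exists_notMem_mul_eq_zero ha m
    fun _ _ _ _ hj hk ↦ by have := eq_of_sub_mem (sub_mem hj hi₀) (sub_mem hk hi₀); lia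
  obtain ⟨i, hin, -, s, hs, his⟩ := exists_mem_and_exists_notMem_mul_eq_zero hb m
    fun _ _ _ _ hi hk ↦ by have := eq_of_sub_mem (sub_mem hj hi) (sub_mem hj hk); lia
  have hx : (x - ((j - i : ℤ) : S)) * (r * s) = 0 := by
    refine (isUnit_intCast_of_ne_zero K (k := i + j + 1) (by lia)).mul_right_eq_zero.mp ?_
    rw [← mul_assoc, ← hab]
    linear_combination s * hjr - r * his
  have hdvd : x - ((j - i : ℤ) : S) ∣ p :=
    dvd_prod_of_mem (fun k : ℤ ↦ x - (k : S)) <| by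
      simp only [mem_range, mem_Ioo] at hin hjn ⊢; lia
  obtain ⟨q, hq⟩ := hdvd
  have hrs : r * s ∈ m := hann <| by
    rw [Submodule.mem_annihilator_span_singleton, smul_eq_mul, hq]
    linear_combination q * hx
  exact (hm.isPrime.mem_or_mem hrs).elim hr hs

end Commutative

section Associative

variable {A : Type*} [Ring A] {h e f : A}

lemma mul_mul_pow_eq_of_lie (hef : ⁅e, f⁆ = h) (hhf : ⁅h, f⁆ = -(2 • f)) (n : ℕ) :
    e * f * f ^ n = f ^ n * (f * e + (n + 1) • (h - n • 1)) := by
  have h_mul_f : h * f = f * h - 2 • f := by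
    rw [sub_eq_add_neg, ← hhf, Ring.lie_def, add_sub_cancel]
  have e_mul_f : e * f = f * e + h := by rw [← hef, Ring.lie_def, add_sub_cancel]
  induction n with
  | zero => simp [e_mul_f]
  | succ n ih =>
    have f_mul_e_mul_f : f * e * f = f * (f * e) + f * h := by rw [mul_assoc, e_mul_f, mul_add]
    rw [pow_succ, ← mul_assoc, ih, mul_assoc, mul_assoc]
    congr 1
    simp only [add_mul, sub_mul, mul_add, mul_sub, smul_mul_assoc, mul_smul_comm, one_mul, mul_one,
      f_mul_e_mul_f, h_mul_f]
    module

lemma pow_mul_pow_eq_map_prod_of_lie {S : Type*} [CommRing S] (φ : S →+* A) {x t : S}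
    (hef : ⁅e, f⁆ = h) (hhf : ⁅h, f⁆ = -(2 • f)) (hx : φ x = h) (ht : φ t = f * e) (n : ℕ) :
    e ^ n * f ^ n = φ (∏ j ∈ range n, (t + (j + 1) • (x - j • 1))) := by
  induction n with
  | zero => simp
  | succ n ih =>
    calc e ^ (n + 1) * f ^ (n + 1) = e ^ n * (e * f * f ^ n) := by
          rw [pow_succ, pow_succ', mul_assoc, mul_assoc]
      _ = e ^ n * f ^ n * (f * e + (n + 1) • (h - n • 1)) := by
          rw [mul_mul_pow_eq_of_lie hef hhf, mul_assoc]
      _ = _ := by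
          rw [ih, prod_range_succ, map_mul, map_add, map_nsmul, map_sub, map_nsmul, map_one, hx, ht]

lemma lie_mul_eq_add (a b c : A) : ⁅a, b * c⁆ = ⁅a, b⁆ * c + b * ⁅a, c⁆ := by
  simp only [Ring.lie_def]
  noncomm_ring

lemma commute_mul_of_lie (hhe : ⁅h, e⁆ = 2 • e) (hhf : ⁅h, f⁆ = -(2 • f)) :
    Commute h (f * e) := by
  rw [commute_iff_lie_eq, lie_mul_eq_add, hhe, hhf, neg_mul, smul_mul_assoc, mul_smul_comm,
    neg_add_cancel]

variable (K : Type*) [Field K] [CharZero K] [Algebra K A]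

open scoped IsMulCommutative in
theorem aeval_prod_X_sub_C_intCast_eq_zero_of_lie (hef : ⁅e, f⁆ = h) (hhe : ⁅h, e⁆ = 2 • e)
    (hhf : ⁅h, f⁆ = -(2 • f)) {n : ℕ} (hn : e ^ n = 0) :
    aeval h (∏ k ∈ Ioo (-n : ℤ) n, (X - C (k : K))) = 0 := by
  have hcomm : ∀ u ∈ ({h, f * e} : Set A), ∀ v ∈ ({h, f * e} : Set A), u * v = v * u := by
    have := (commute_mul_of_lie hhe hhf).eq
    rintro u (rfl | rfl) v (rfl | rfl) <;> simp [this]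
  have := Algebra.isMulCommutative_adjoin K hcomm
  let φ := (Algebra.adjoin K {h, f * e}).val
  have hφ : Function.Injective φ := Subtype.val_injective
  obtain ⟨x, hx⟩ : ∃ x, φ x = h := ⟨⟨h, Algebra.subset_adjoin (by simp)⟩, rfl⟩
  obtain ⟨t, ht⟩ : ∃ t, φ t = f * e := ⟨⟨f * e, Algebra.subset_adjoin (by simp)⟩, rfl⟩
  have ha := pow_mul_pow_eq_map_prod_of_lie φ.toRingHom hef hhf hx ht n
  -- The triple `(f, -h, e)` has `e * f = f * e + h` in the role of `f * e`.
  have hb := pow_mul_pow_eq_map_prod_of_lie φ.toRingHom (e := f) (f := e) (h := -h)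
    (x := -x) (t := t + x) (by rw [← hef]; simp [Ring.lie_def])
    (by rw [← hhe]; simp only [Ring.lie_def]; noncomm_ring) (by simp [hx])
    (by simp [hx, ht, ← hef, Ring.lie_def]) n
  rw [hn, zero_mul, eq_comm] at ha
  rw [hn, mul_zero, eq_comm] at hb
  have hprod := prod_sub_intCast_eq_zero_of_sub_eq K (x := x)
    (fun i j ↦ by simp only [nsmul_eq_mul]; push_cast; ring)
    ((map_eq_zero_iff _ hφ).mp ha) ((map_eq_zero_iff _ hφ).mp hb)
  have haeval : aeval x (∏ k ∈ Ioo (-n : ℤ) n, (X - C (k : K))) = 0 := by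
    simpa [map_prod] using hprod
  rw [← hx, aeval_algHom_apply, haeval, map_zero]

variable {K}

lemma isNilpotent_of_lie_eq_smul [FiniteDimensional K A] {a b : A} {c : K} (hc : c ≠ 0)
    (hab : ⁅a, b⁆ = c • b) : IsNilpotent b := by
  by_contra hb
  have lie_pow (k : ℕ) : ⁅a, b ^ k⁆ = (k * c) • b ^ k := by
    induction k with
    | zero => simp [Ring.lie_def]
    | succ k ih =>
      rw [pow_succ, lie_mul_eq_add, ih, hab, smul_mul_assoc, mul_smul_comm, ← add_smul,
        Nat.cast_succ, add_one_mul]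
  have hinj : Function.Injective fun k : ℕ ↦ (k * c : K) := fun k l hkl ↦ by simpa [hc] using hkl
  have hli := End.eigenvectors_linearIndependent'
    (LinearMap.mulLeft K a - LinearMap.mulRight K a) _ hinj (b ^ ·)
    fun k ↦ End.hasEigenvector_iff.mpr
      ⟨End.mem_eigenspace_iff.mpr (by simpa [Ring.lie_def] using lie_pow k),
        fun h0 ↦ hb ⟨k, h0⟩⟩
  exact not_finite_iff_infinite.mpr inferInstance hli.finite

end Associative

section LieModule

attribute [local instance] LieRing.ofAssociativeRing

variable {K L M : Type*} [Field K] [CharZero K] [LieRing L] [LieAlgebra K L]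
  [AddCommGroup M] [Module K M] [LieRingModule L M] [LieModule K L M] [FiniteDimensional K M]
  {h e f : L}

theorem isSemisimple_toEnd_of_isSl2Triple (t : IsSl2Triple h e f) :
    (LieModule.toEnd K L M h).IsSemisimple := by
  have hef := congrArg (LieModule.toEnd K L M) t.lie_e_f
  have hhe := congrArg (LieModule.toEnd K L M) t.lie_h_e_nsmul
  have hhf := congrArg (LieModule.toEnd K L M) t.lie_h_f_nsmul
  rw [LieHom.map_lie] at hef hhe hhf
  rw [map_nsmul] at hhe
  rw [map_neg, map_nsmul] at hhf
  obtain ⟨n, hn⟩ : IsNilpotent (LieModule.toEnd K L M e) :=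
    isNilpotent_of_lie_eq_smul (c := (2 : K)) two_ne_zero
      (hhe.trans (ofNat_smul_eq_nsmul K 2 _).symm)
  refine End.isSemisimple_of_squarefree_aeval_eq_zero ?_
    (aeval_prod_X_sub_C_intCast_eq_zero_of_lie K hef hhe hhf hn)
  exact (separable_prod_X_sub_C_iff'.mpr fun _ _ _ _ hkl ↦ Int.cast_injective hkl).squarefree

lemma eq_zero_of_isSl2Triple_of_lie_eq_neg (t : IsSl2Triple h e f) {x : M}
    (hx : ⁅h, x⁆ = (-1 : K) • x) (hex : ⁅e, x⁆ = 0) : x = 0 := by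
  by_contra hne
  have hprim : t.HasPrimitiveVectorWith x (-1 : K) := ⟨hne, hx, hex⟩
  obtain ⟨n, hn⟩ := hprim.exists_nat
  exact Nat.cast_add_one_ne_zero (R := K) n (by rw [← hn, neg_add_cancel])

end LieModule

section Killing

variable {R : Type*} [CommRing R]

lemma codisjoint_eigenspace_range_of_isSemisimple {M : Type*} [AddCommGroup M] [Module R M]
    {g : End R M} (hg : g.IsSemisimple) (μ : R) :
    Codisjoint (g.eigenspace μ) (LinearMap.range (g - algebraMap R (End R M) μ)) := by
  set d := g - algebraMap R (End R M) μ with hd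
  have hinv : LinearMap.range d ∈ g.invtSubmodule := by
    rintro _ ⟨v, rfl⟩
    exact ⟨g v, by simp [hd]⟩
  obtain ⟨q, hq, hcompl⟩ := End.isSemisimple_iff.mp hg _ hinv
  refine hcompl.symm.codisjoint.mono_left fun v hv ↦ ?_
  have hdv : d v ∈ q := by simpa [hd] using q.sub_mem (hq hv) (q.smul_mem μ hv)
  have hdv0 : d v = 0 := Submodule.disjoint_def.mp hcompl.disjoint _ ⟨v, rfl⟩ hdv
  simpa [hd, sub_eq_zero] using hdv0

lemma eq_zero_of_forall_mem_eigenspace_neg_killingForm_eq_zero {L : Type*} [LieRing L]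
    [LieAlgebra R L] [LieAlgebra.IsKilling R L] {h z : L} {μ : R}
    (hss : (LieAlgebra.ad R L h).IsSemisimple) (hz : ⁅h, z⁆ = μ • z)
    (horth : ∀ y ∈ (LieAlgebra.ad R L h).eigenspace (-μ), killingForm R L z y = 0) : z = 0 := by
  refine (LieAlgebra.IsKilling.killingForm_nondegenerate R L).1 z fun u ↦ ?_
  obtain ⟨y, hy, _, ⟨w, rfl⟩, rfl⟩ := Submodule.mem_sup.mp <|
    (codisjoint_eigenspace_range_of_isSemisimple hss (-μ)).eq_top ▸ Submodule.mem_top (x := u)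
  have hskew := LieModule.traceForm_apply_lie_apply' R L L h z w
  rw [hz, map_smul, LinearMap.smul_apply, eq_neg_iff_add_eq_zero, add_comm] at hskew
  simpa [horth y hy] using hskew

end Killing

theorem sl2_form_skew_nondegenerate_general
    {K L : Type*} [Field K] [CharZero K] [LieRing L] [LieAlgebra K L]
    [FiniteDimensional K L] [LieAlgebra.IsKilling K L]
    (e h f : L)
    (hhe : ⁅h, e⁆ = (2 : K) • e) (hhf : ⁅h, f⁆ = (-2 : K) • f) (hef : ⁅e, f⁆ = h) :
    (∀ x ∈ Module.End.eigenspace (LieAlgebra.ad K L h) (-1),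
      ∀ y ∈ Module.End.eigenspace (LieAlgebra.ad K L h) (-1),
        killingForm K L e ⁅x, y⁆ = - killingForm K L e ⁅y, x⁆) ∧
    (∀ x ∈ Module.End.eigenspace (LieAlgebra.ad K L h) (-1),
      (∀ y ∈ Module.End.eigenspace (LieAlgebra.ad K L h) (-1),
        killingForm K L e ⁅x, y⁆ = 0) → x = 0) := by
  refine ⟨fun x _ y _ ↦ by rw [← lie_skew x y, map_neg], fun x hx hxy ↦ ?_⟩
  have hhx : ⁅h, x⁆ = (-1 : K) • x := End.mem_eigenspace_iff.mp hx
  by_contra hx0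
  have t : IsSl2Triple h e f :=
    { h_ne_zero := by
        rintro rfl
        exact hx0 (by simpa using hhx)
      lie_e_f := hef
      lie_h_e_nsmul := by rw [hhe, ofNat_smul_eq_nsmul]
      lie_h_f_nsmul := by rw [hhf, neg_smul, ofNat_smul_eq_nsmul] }
  have hhex : ⁅h, ⁅e, x⁆⁆ = (1 : K) • ⁅e, x⁆ := by
    rw [leibniz_lie, hhe, hhx, smul_lie, lie_smul]
    module
  have hex : ⁅e, x⁆ = 0 := eq_zero_of_forall_mem_eigenspace_neg_killingForm_eq_zero
    (isSemisimple_toEnd_of_isSl2Triple t) hhex fun y hy ↦ by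
      rw [LieModule.traceForm_apply_lie_apply, hxy y hy]
  exact hx0 (eq_zero_of_isSl2Triple_of_lie_eq_neg t hhx hex)

/-- Let `(e, h, f)` be an `sl₂`-triple in a complex semisimple Lie algebra `g`, and let
`g(i)` denote the `ad(h)`-eigenspace of eigenvalue `i`.  Then the bilinear form
`⟨x, y⟩ = κ(e, [x, y])` on `g(−1)` (where `κ` is the Killing form) is skew-symmetric
and non-degenerate. -/
theorem sl2_form_skew_nondegenerate
    {L : Type*} [LieRing L] [LieAlgebra ℂ L]
    [FiniteDimensional ℂ L] [LieAlgebra.IsSemisimple ℂ L]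
    (e h f : L)
    (hhe : ⁅h, e⁆ = (2 : ℂ) • e) (hhf : ⁅h, f⁆ = (-2 : ℂ) • f) (hef : ⁅e, f⁆ = h) :
    (∀ x ∈ Module.End.eigenspace (LieAlgebra.ad ℂ L h) (-1),
      ∀ y ∈ Module.End.eigenspace (LieAlgebra.ad ℂ L h) (-1),
        killingForm ℂ L e ⁅x, y⁆ = - killingForm ℂ L e ⁅y, x⁆) ∧
    (∀ x ∈ Module.End.eigenspace (LieAlgebra.ad ℂ L h) (-1),
      (∀ y ∈ Module.End.eigenspace (LieAlgebra.ad ℂ L h) (-1),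
        killingForm ℂ L e ⁅x, y⁆ = 0) → x = 0) :=
  sl2_form_skew_nondegenerate_general e h f hhe hhf hef
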